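/- Let p ≥ 1, set n = 2p, let Λ be a full-rank lattice in ℝⁿ and let α, α', β, β' > 0 be reals. Then Spec(Λ,α,β,p) = Spec(Λ,α',β',p) (as functions ℝ → ℕ) if and only if {α, β} = {α', β'} as unordered pairs. -/

import Mathlib

open Real
open scoped RealInnerProductSpace

/-- The dual lattice `Λ* = {v : ∀ w ∈ Λ, ⟨v,w⟩ ∈ ℤ}` of a lattice `Λ ⊆ ℝⁿ`. -/
def dualLattice {n : ℕ} (L : Submodule ℤ (EuclideanSpace ℝ (Fin n))) :
    Set (EuclideanSpace ℝ (Fin n)) :=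
  {v | ∀ w ∈ L, ∃ m : ℤ, ⟪v, w⟫ = (m : ℝ)}

/-- The spectrum, with multiplicities, of the generalized Hodge-Laplace operator
`F_{αβ} = α dδ + β δd` on `p`-forms on the flat torus `ℝⁿ/Λ` (Theorem 3.9):
`x ↦ C(n-1,p-1)·#{l ∈ Λ* : 4π²α‖l‖² = x} + C(n-1,p)·#{l ∈ Λ* : 4π²β‖l‖² = x}`. -/
noncomputable def torusSpec {n : ℕ} (L : Submodule ℤ (EuclideanSpace ℝ (Fin n)))
    (α β : ℝ) (p : ℕ) : ℝ → ℕ := fun x =>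
  (n - 1).choose (p - 1) *
      Nat.card {l : EuclideanSpace ℝ (Fin n) //
        l ∈ dualLattice L ∧ 4 * π ^ 2 * α * ‖l‖ ^ 2 = x} +
    (n - 1).choose p *
      Nat.card {l : EuclideanSpace ℝ (Fin n) //
        l ∈ dualLattice L ∧ 4 * π ^ 2 * β * ‖l‖ ^ 2 = x}

/-!
Let `μ` be the multiplicity function of the Laplace spectrum of `ℝⁿ/Λ`. The spectrum of `F_{αβ}`
on `p`-forms is `C(n-1,p-1) μ(x/α) + C(n-1,p) μ(x/β)`, a combination of two dilates of `μ`. Since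
`Λ*` has a shortest nonzero vector, the Laplacian has a least positive eigenvalue, so the dilates
of `μ` are linearly independent: the spectrum determines the coefficient of each dilate. The two
coefficients coincide exactly when `n = 2p`, and only then can `α` and `β` be interchanged.
-/

section Dilates

variable {K R : Type*} [Field K] [LinearOrder K] [IsStrictOrderedRing K]

theorem div_lt_one_of_abs_le {a b : K} (hab : |a| ≤ |b|) (hne : a ≠ b) : a / b < 1 := by
  have hb : 0 < |b| := by
    refine abs_pos.2 fun hb ↦ hne ?_
    rw [hb, abs_zero] at hab
    rw [hb, abs_nonpos_iff.1 hab]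
  have hle : a / b ≤ 1 := (le_abs_self _).trans (by rwa [abs_div, div_le_one hb])
  exact hle.lt_of_ne fun h ↦ hne ((div_eq_one_iff_eq (abs_pos.1 hb)).1 h)

-- If two combinations agree, compare them at `a * m` with `|a|` minimal among the dilations whose
-- coefficients differ: `a` is the only such dilation contributing there.
theorem linearIndependent_dilates [Semiring R] [IsCancelAdd R] [IsRightCancelMulZero R]
    {f : K → R} {m : K} (hm : 0 < m) (hfm : f m ≠ 0) (hf : ∀ t ≠ 0, t < m → f t = 0) :
    LinearIndependent R fun (a : Kˣ) (x : K) ↦ f (x / a) := by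
  classical
  refine linearIndependent_iffₛ.2 fun c d hcd ↦ ?_
  by_contra hne
  obtain ⟨a, ha, hmin⟩ := (c.neLocus d).exists_min_image (fun b ↦ |(b : K)|)
    (Finsupp.nonempty_neLocus_iff.2 hne)
  have hterm : ∀ b ≠ a, c b * f (a * m / b) = d b * f (a * m / b) := by
    intro b hba
    by_cases hb : c b = d b
    · rw [hb]
    · have hlt : (a : K) / b < 1 := div_lt_one_of_abs_le (hmin b (Finsupp.mem_neLocus.2 hb))
        (Units.val_injective.ne hba.symm)
      have hzero : f (a * m / b) = 0 := by
        refine hf _ (div_ne_zero (mul_ne_zero a.ne_zero hm.ne') b.ne_zero) ?_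
        rw [mul_div_right_comm]
        exact mul_lt_of_lt_one_left hm hlt
      rw [hzero, mul_zero, mul_zero]
  have hsum : ∑ b ∈ c.support ∪ d.support, c b * f (a * m / b) =
      ∑ b ∈ c.support ∪ d.support, d b * f (a * m / b) := by
    have h := congrFun hcd (a * m)
    rw [Finsupp.linearCombination_apply, Finsupp.linearCombination_apply,
      Finsupp.sum_of_support_subset c Finset.subset_union_left _ (by simp),
      Finsupp.sum_of_support_subset d Finset.subset_union_right _ (by simp)] at h
    simpa only [Finset.sum_apply, Pi.smul_apply, smul_eq_mul] using h
  have hmem : a ∈ c.support ∪ d.support := by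
    contrapose! ha
    simp_all
  rw [← Finset.add_sum_erase _ _ hmem, ← Finset.add_sum_erase _ _ hmem,
    Finset.sum_congr rfl fun b hb ↦ hterm b (Finset.ne_of_mem_erase hb), add_left_inj,
    mul_div_cancel_left₀ m a.ne_zero] at hsum
  exact Finsupp.mem_neLocus.1 ha (mul_right_cancel₀ hfm hsum)

end Dilates

theorem choose_eq_choose_succ_iff {n k : ℕ} (hk : k ≤ n) :
    n.choose k = n.choose (k + 1) ↔ n = 2 * k + 1 := by
  have hrec := n.choose_succ_right_eq k
  constructor
  · intro h
    rw [← h] at hrec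
    have := Nat.eq_of_mul_eq_mul_left (Nat.choose_pos hk) hrec
    omega
  · rintro rfl
    exact (Nat.choose_symm_half k).symm

section DiscreteSubmodule

variable {E : Type*} [NormedAddCommGroup E] [ProperSpace E] (M : Submodule ℤ E)
  [DiscreteTopology M]

theorem finite_setOf_mem_and_norm_le (r : ℝ) : {l | l ∈ M ∧ ‖l‖ ≤ r}.Finite := by
  have hclosed : IsClosed (M : Set E) := M.toAddSubgroup.isClosed_of_discrete
  refine (Metric.finite_isBounded_inter_isClosed DiscreteTopology.isDiscrete
    (Metric.isBounded_closedBall (x := 0) (r := r)) hclosed).subset ?_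
  rintro l ⟨hl, hr⟩
  exact ⟨mem_closedBall_zero_iff.2 hr, hl⟩

theorem exists_ne_zero_forall_norm_le (hM : M ≠ ⊥) :
    ∃ w ∈ M, w ≠ 0 ∧ ∀ l ∈ M, l ≠ 0 → ‖w‖ ≤ ‖l‖ := by
  obtain ⟨v, hv, hv0⟩ := M.exists_mem_ne_zero_of_ne_bot hM
  obtain ⟨w, ⟨⟨hw, hwv⟩, hw0⟩, hmin⟩ := Set.exists_min_image
    ({l | l ∈ M ∧ ‖l‖ ≤ ‖v‖} \ {0}) norm
    ((finite_setOf_mem_and_norm_le M ‖v‖).subset Set.sdiff_subset) ⟨v, ⟨hv, le_rfl⟩, hv0⟩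
  refine ⟨w, hw, hw0, fun l hl hl0 ↦ ?_⟩
  rcases le_total ‖l‖ ‖v‖ with hlv | hvl
  · exact hmin l ⟨⟨hl, hlv⟩, hl0⟩
  · exact hwv.trans hvl

end DiscreteSubmodule

section DualLattice

variable {E : Type*} [NormedAddCommGroup E] [InnerProductSpace ℝ E]

theorem innerₗ_nondegenerate : (innerₗ E).Nondegenerate :=
  ⟨fun v hv ↦ inner_self_eq_zero.1 (hv v), fun v hv ↦ inner_self_eq_zero.1 (hv v)⟩

variable [FiniteDimensional ℝ E] (L : Submodule ℤ E) [DiscreteTopology L] [IsZLattice ℝ L]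

theorem exists_basis_dualSubmodule_eq_span :
    ∃ b : Module.Basis (Module.Free.ChooseBasisIndex ℤ L) ℝ E,
      LinearMap.BilinForm.dualSubmodule (innerₗ E) L = Submodule.span ℤ (Set.range b) := by
  classical
  let b := (Module.Free.chooseBasis ℤ L).ofZLatticeBasis ℝ L
  refine ⟨LinearMap.BilinForm.dualBasis (innerₗ E) innerₗ_nondegenerate b, ?_⟩
  rw [← LinearMap.BilinForm.dualSubmodule_span_of_basis, Module.Basis.ofZLatticeBasis_span]

instance discreteTopology_dualSubmodule :
    DiscreteTopology (LinearMap.BilinForm.dualSubmodule (innerₗ E) L) := by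
  obtain ⟨b, hb⟩ := exists_basis_dualSubmodule_eq_span L
  rw [hb]
  infer_instance

theorem dualSubmodule_ne_bot [Nontrivial E] :
    LinearMap.BilinForm.dualSubmodule (innerₗ E) L ≠ ⊥ := by
  obtain ⟨b, hb⟩ := exists_basis_dualSubmodule_eq_span L
  obtain ⟨i⟩ := b.index_nonempty
  rw [hb]
  exact (Submodule.ne_bot_iff _).2 ⟨b i, Submodule.subset_span ⟨i, rfl⟩, b.ne_zero i⟩

end DualLattice

section Spectrum

variable {n : ℕ} (L : Submodule ℤ (EuclideanSpace ℝ (Fin n)))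

theorem mem_dualLattice_iff_mem_dualSubmodule {v : EuclideanSpace ℝ (Fin n)} :
    v ∈ dualLattice L ↔ v ∈ LinearMap.BilinForm.dualSubmodule (innerₗ _) L := by
  simp [dualLattice, LinearMap.BilinForm.mem_dualSubmodule, Submodule.mem_one, eq_comm]

/-- The multiplicity of `x` in the spectrum of the Laplace operator on functions on the flat torus
`ℝⁿ/Λ`, whose eigenfunctions are the characters `exp (2πi⟨l, ·⟩)` with `l ∈ Λ*`. -/
noncomputable def laplaceMultiplicity (x : ℝ) : ℕ :=
  Nat.card {l : EuclideanSpace ℝ (Fin n) // l ∈ dualLattice L ∧ 4 * π ^ 2 * ‖l‖ ^ 2 = x}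

theorem laplaceMultiplicity_div {a : ℝ} (ha : a ≠ 0) (x : ℝ) :
    laplaceMultiplicity L (x / a) =
      Nat.card {l : EuclideanSpace ℝ (Fin n) //
        l ∈ dualLattice L ∧ 4 * π ^ 2 * a * ‖l‖ ^ 2 = x} := by
  simp only [laplaceMultiplicity, eq_div_iff ha, mul_right_comm _ a]

theorem torusSpec_eq_linearCombination (α β : ℝˣ) (p : ℕ) :
    torusSpec L α β p =
      Finsupp.linearCombination ℕ (fun (a : ℝˣ) (x : ℝ) ↦ laplaceMultiplicity L (x / a))
        (Finsupp.single α ((n - 1).choose (p - 1)) + Finsupp.single β ((n - 1).choose p)) := by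
  ext x
  simp [torusSpec, laplaceMultiplicity_div]

variable [DiscreteTopology L] [IsZLattice ℝ L]

theorem laplaceMultiplicity_norm_sq_ne_zero {w : EuclideanSpace ℝ (Fin n)}
    (hw : w ∈ dualLattice L) : laplaceMultiplicity L (4 * π ^ 2 * ‖w‖ ^ 2) ≠ 0 := by
  have hfin : {l | l ∈ dualLattice L ∧ 4 * π ^ 2 * ‖l‖ ^ 2 = 4 * π ^ 2 * ‖w‖ ^ 2}.Finite := by
    refine (finite_setOf_mem_and_norm_le
      (LinearMap.BilinForm.dualSubmodule (innerₗ _) L) ‖w‖).subset ?_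
    rintro l ⟨hl, heq⟩
    have hsq : ‖l‖ ^ 2 = ‖w‖ ^ 2 := mul_left_cancel₀ (by positivity) heq
    exact ⟨(mem_dualLattice_iff_mem_dualSubmodule L).1 hl,
      ((sq_eq_sq₀ (norm_nonneg l) (norm_nonneg w)).1 hsq).le⟩
  exact Nat.card_ne_zero.2 ⟨⟨w, hw, rfl⟩, hfin.to_subtype⟩

theorem exists_least_pos_laplaceMultiplicity_ne_zero (hn : 0 < n) :
    ∃ m, 0 < m ∧ laplaceMultiplicity L m ≠ 0 ∧
      ∀ t ≠ 0, t < m → laplaceMultiplicity L t = 0 := by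
  have : Nonempty (Fin n) := ⟨⟨0, hn⟩⟩
  obtain ⟨w, hw, hw0, hmin⟩ := exists_ne_zero_forall_norm_le _ (dualSubmodule_ne_bot L)
  refine ⟨4 * π ^ 2 * ‖w‖ ^ 2, by positivity,
    laplaceMultiplicity_norm_sq_ne_zero L ((mem_dualLattice_iff_mem_dualSubmodule L).2 hw),
    fun t ht htm ↦ ?_⟩
  refine Nat.card_eq_zero.2 (.inl ⟨?_⟩)
  rintro ⟨l, hl, rfl⟩
  have hl0 : l ≠ 0 := by
    rintro rfl
    simp at ht
  have hle : ‖w‖ ≤ ‖l‖ := hmin l ((mem_dualLattice_iff_mem_dualSubmodule L).1 hl) hl0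
  exact htm.not_ge (by gcongr)

theorem linearIndependent_laplaceMultiplicity_dilates (hn : 0 < n) :
    LinearIndependent ℕ fun (a : ℝˣ) (x : ℝ) ↦ laplaceMultiplicity L (x / a) := by
  obtain ⟨m, hm, hmult, hbelow⟩ := exists_least_pos_laplaceMultiplicity_ne_zero L hn
  exact linearIndependent_dilates hm hmult hbelow

end Spectrum

theorem stmt_9_general {n p : ℕ} (hp : 0 < p) (hpn : p < n)
    (L : Submodule ℤ (EuclideanSpace ℝ (Fin n))) [DiscreteTopology L] [IsZLattice ℝ L]
    {α α' β β' : ℝ} (hα : α ≠ 0) (hα' : α' ≠ 0) (hβ : β ≠ 0) (hβ' : β' ≠ 0) :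
    torusSpec L α β p = torusSpec L α' β' p ↔
      (α = α' ∧ β = β') ∨ (n = 2 * p ∧ α = β' ∧ β = α') := by
  have hu : (n - 1).choose (p - 1) ≠ 0 := Nat.choose_ne_zero_iff.2 (by omega)
  have hv : (n - 1).choose p ≠ 0 := Nat.choose_ne_zero_iff.2 (by omega)
  have huv : (n - 1).choose (p - 1) = (n - 1).choose p ↔ n = 2 * p := by
    have h := choose_eq_choose_succ_iff (n := n - 1) (k := p - 1) (by omega)
    rw [Nat.sub_add_cancel hp] at h
    omega
  lift α to ℝˣ using hα.isUnit
  lift α' to ℝˣ using hα'.isUnit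
  lift β to ℝˣ using hβ.isUnit
  lift β' to ℝˣ using hβ'.isUnit
  rw [torusSpec_eq_linearCombination, torusSpec_eq_linearCombination,
    (linearIndependent_laplaceMultiplicity_dilates L (hp.trans hpn)).eq_iff,
    Finsupp.single_add_single_eq_single_add_single hu hv, huv]
  simp [hu, Units.val_inj]

/-- Theorem 3.18 (case `n = 2p`): on a fixed flat torus, `F_{αβ,p}` and `F_{α'β',p}` are
isospectral iff `{α, β} = {α', β'}` as unordered pairs. -/
theorem stmt_9 (p : ℕ) (hp : 1 ≤ p)
    (L : Submodule ℤ (EuclideanSpace ℝ (Fin (2 * p))))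
    [DiscreteTopology L] [IsZLattice ℝ L]
    (α α' β β' : ℝ) (hα : 0 < α) (hα' : 0 < α') (hβ : 0 < β) (hβ' : 0 < β') :
    torusSpec L α β p = torusSpec L α' β' p ↔
      ((α = α' ∧ β = β') ∨ (α = β' ∧ β = α')) := by
  simpa using stmt_9_general hp (by omega) L hα.ne' hα'.ne' hβ.ne' hβ'.ne'
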